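/- arXiv:2308.14351 — 2 statements merged into one kernel-verified Lean document; each statement's English description precedes it below -/
import Mathlib

section
/- Let R be a nontrivial commutative ring that is locally residually-ℤ and let G be a subgroup of UT₃(R) containing a₁ and a₂. Then the representation G ≤ UT₃(R) satisfies the Lame Property if and only if both of the following hold: (1) for every y ∈ C_G(a₂) ∖ Z(G), the entry y₁₂ is not a zero divisor in R; (2) for every x ∈ C_G(a₁) ∖ Z(G), the entry x₂₃ is not a zero divisor in R. -/
open Matrix

/-- A 3×3 matrix is *upper unitriangular* if all diagonal entries are `1`
and all entries below the diagonal are `0`. -/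
def IsUnitriangular {R : Type*} [CommRing R] (M : Matrix (Fin 3) (Fin 3) R) : Prop :=
  (∀ i, M i i = 1) ∧ ∀ i j : Fin 3, j < i → M i j = 0

/-- The upper unitriangular matrix with above-diagonal entries `a b c`, as a unit. -/
def ut {R : Type*} [CommRing R] (a b c : R) : (Matrix (Fin 3) (Fin 3) R)ˣ where
  val := !![1, a, b; 0, 1, c; 0, 0, 1]
  inv := !![1, -a, a * c - b; 0, 1, -c; 0, 0, 1]
  val_inv := by
    ext i j
    fin_cases i <;> fin_cases j <;>
      simp [Matrix.mul_apply, Fin.sum_univ_three, Matrix.one_apply, Matrix.vecHead, Matrix.vecTail] <;> ring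
  inv_val := by
    ext i j
    fin_cases i <;> fin_cases j <;>
      simp [Matrix.mul_apply, Fin.sum_univ_three, Matrix.one_apply, Matrix.vecHead, Matrix.vecTail] <;> ring

lemma ut_eq_iff {R : Type*} [CommRing R] (g : (Matrix (Fin 3) (Fin 3) R)ˣ) :
    IsUnitriangular (g : Matrix (Fin 3) (Fin 3) R) ↔
      ∃ a b c : R, g = ut a b c := by
  constructor
  · rintro ⟨h1, h2⟩
    refine ⟨(g : Matrix (Fin 3) (Fin 3) R) 0 1, (g : Matrix (Fin 3) (Fin 3) R) 0 2,
      (g : Matrix (Fin 3) (Fin 3) R) 1 2, Units.ext ?_⟩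
    ext i j
    fin_cases i <;> fin_cases j <;>
      simp [ut, Matrix.vecHead, Matrix.vecTail, h1, h2 1 0 (by decide), h2 2 0 (by decide), h2 2 1 (by decide)]
  · rintro ⟨a, b, c, rfl⟩
    constructor
    · intro i; fin_cases i <;> simp [ut]
    · intro i j hij
      fin_cases i <;> fin_cases j <;> simp_all [ut, Matrix.vecHead, Matrix.vecTail]

/-- `UT₃(R)`: the group of 3×3 upper unitriangular matrices over `R`, realized as the
subgroup of units of the matrix ring whose underlying matrices are upper unitriangular. -/
def UT3 (R : Type*) [CommRing R] : Subgroup (Matrix (Fin 3) (Fin 3) R)ˣ where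
  carrier := {g | IsUnitriangular (g : Matrix (Fin 3) (Fin 3) R)}
  one_mem' := by
    constructor
    · intro i; simp
    · intro i j hij; simp [Matrix.one_apply, hij.ne']
  mul_mem' := by
    intro a b ha hb
    rw [Set.mem_setOf_eq, ut_eq_iff] at *
    obtain ⟨a1, a2, a3, rfl⟩ := ha
    obtain ⟨b1, b2, b3, rfl⟩ := hb
    refine ⟨a1 + b1, a2 + b2 + a1 * b3, a3 + b3, Units.ext ?_⟩
    ext i j
    fin_cases i <;> fin_cases j <;>
      simp [ut, Matrix.mul_apply, Fin.sum_univ_three, Matrix.vecHead, Matrix.vecTail] <;> ring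
  inv_mem' := by
    intro a ha
    rw [Set.mem_setOf_eq, ut_eq_iff] at *
    obtain ⟨a1, a2, a3, rfl⟩ := ha
    refine ⟨-a1, a1 * a3 - a2, -a3, Units.ext ?_⟩
    rfl

/-- The generator `a₁` of the Heisenberg group: `(2,3)`-entry `1`, other
above-diagonal entries `0`. -/
def genA1 (R : Type*) [CommRing R] : (Matrix (Fin 3) (Fin 3) R)ˣ := ut 0 0 1

/-- The generator `a₂` of the Heisenberg group: `(1,2)`-entry `1`, other
above-diagonal entries `0`. -/
def genA2 (R : Type*) [CommRing R] : (Matrix (Fin 3) (Fin 3) R)ˣ := ut 1 0 0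

lemma genA1_mem (R : Type*) [CommRing R] : genA1 R ∈ UT3 R :=
  (ut_eq_iff _).mpr ⟨0, 0, 1, rfl⟩

lemma genA2_mem (R : Type*) [CommRing R] : genA2 R ∈ UT3 R :=
  (ut_eq_iff _).mpr ⟨1, 0, 0, rfl⟩

/-- A commutative ring `R` is *locally residually-ℤ* if for every finitely generated
subring `R₀` of `R` and every nonzero `r ∈ R₀` there is a ring homomorphism
`φ : R₀ →+* ℤ` with `φ r ≠ 0`. -/
def LocResZ (R : Type*) [CommRing R] : Prop :=
  ∀ R₀ : Subring R, (∃ s : Finset R, R₀ = Subring.closure ↑s) →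
    ∀ r : R₀, r ≠ 0 → ∃ φ : R₀ →+* ℤ, φ r ≠ 0

/-- The representation `G ≤ UT₃(R)` satisfies the *Lame Property* if for every
`g ∈ C_G(a₁) ∪ C_G(a₂)`, either `g₁₂² + g₂₃² = 0` or `g₁₂² + g₂₃²` is not a zero
divisor in `R`. -/
def LameProperty (R : Type*) [CommRing R] (G : Subgroup (Matrix (Fin 3) (Fin 3) R)ˣ) : Prop :=
  ∀ g ∈ G, (g * genA1 R = genA1 R * g ∨ g * genA2 R = genA2 R * g) →
    ((g : Matrix (Fin 3) (Fin 3) R) 0 1 ^ 2 + (g : Matrix (Fin 3) (Fin 3) R) 1 2 ^ 2 = 0 ∨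
      (g : Matrix (Fin 3) (Fin 3) R) 0 1 ^ 2 + (g : Matrix (Fin 3) (Fin 3) R) 1 2 ^ 2 ∈
        nonZeroDivisors R)

/-!
Two unitriangular matrices commute iff `g₁₂ h₂₃ = h₁₂ g₂₃`. Hence `C(a₁)` is cut out by `g₁₂ = 0`
and `C(a₂)` by `g₂₃ = 0`; on either centralizer `g₁₂² + g₂₃²` is the square of the other entry, and
that entry vanishes exactly when `g` is central. A locally residually-ℤ ring is reduced, because
homomorphisms to `ℤ` kill nilpotents, so the entry vanishes as soon as its square does.
-/

theorem pow_mem_nonZeroDivisors_iff {M : Type*} [CommMonoidWithZero M] {x : M} {n : ℕ}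
    (hn : n ≠ 0) : x ^ n ∈ nonZeroDivisors M ↔ x ∈ nonZeroDivisors M := by
  refine ⟨fun hx => ?_, fun hx => pow_mem hx n⟩
  rw [← mul_pow_sub_one hn] at hx
  exact (mul_mem_nonZeroDivisors.mp hx).1

theorem pow_eq_zero_or_pow_mem_nonZeroDivisors_iff {M : Type*} [CommMonoidWithZero M] [IsReduced M]
    {x : M} {n : ℕ} (hn : n ≠ 0) :
    x ^ n = 0 ∨ x ^ n ∈ nonZeroDivisors M ↔ (x ≠ 0 → x ∈ nonZeroDivisors M) := by
  rw [pow_eq_zero_iff hn, pow_mem_nonZeroDivisors_iff hn, or_iff_not_imp_left]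

section

variable {R : Type*} [CommRing R]

theorem LocResZ.isReduced (hR : LocResZ R) : IsReduced R where
  eq_zero r hr := by
    by_contra hr0
    let R₀ := Subring.closure (({r} : Finset R) : Set R)
    let r₀ : R₀ := ⟨r, Subring.subset_closure (by simp)⟩
    obtain ⟨φ, hφ⟩ := hR R₀ ⟨{r}, rfl⟩ r₀ fun h => hr0 (congrArg Subtype.val h)
    have hr₀ : IsNilpotent r₀ := (IsNilpotent.map_iff R₀.subtype_injective).mp hr
    exact hφ (hr₀.map φ).eq_zero

theorem ut_inj {a b c a' b' c' : R} : ut a b c = ut a' b' c' ↔ a = a' ∧ b = b' ∧ c = c' := by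
  simp [ut, Units.ext_iff, and_assoc]

theorem ut_mul_ut (a b c a' b' c' : R) :
    ut a b c * ut a' b' c' = ut (a + a') (b + b' + a * c') (c + c') := by
  ext i j
  fin_cases i <;> fin_cases j <;> simp [ut] <;> ring

theorem commute_ut_iff {a b c a' b' c' : R} :
    Commute (ut a b c) (ut a' b' c') ↔ a * c' = a' * c := by
  simp [commute_iff_eq, ut_mul_ut, ut_inj, add_comm]

variable {g h : (Matrix (Fin 3) (Fin 3) R)ˣ}

theorem commute_iff_of_mem_UT3 (hg : g ∈ UT3 R) (hh : h ∈ UT3 R) :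
    Commute g h ↔ g.val 0 1 * h.val 1 2 = h.val 0 1 * g.val 1 2 := by
  obtain ⟨a, b, c, rfl⟩ := (ut_eq_iff g).mp hg
  obtain ⟨a', b', c', rfl⟩ := (ut_eq_iff h).mp hh
  rw [commute_ut_iff]
  simp [ut]

theorem commute_genA1_iff (hg : g ∈ UT3 R) : Commute g (genA1 R) ↔ g.val 0 1 = 0 := by
  rw [commute_iff_of_mem_UT3 hg (genA1_mem R)]
  simp [genA1, ut]

theorem commute_genA2_iff (hg : g ∈ UT3 R) : Commute g (genA2 R) ↔ g.val 1 2 = 0 := by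
  rw [commute_iff_of_mem_UT3 hg (genA2_mem R)]
  simp [genA2, ut, eq_comm]

variable {G : Subgroup (Matrix (Fin 3) (Fin 3) R)ˣ}

theorem forall_mem_commute_iff (hG : G ≤ UT3 R) (h1 : genA1 R ∈ G) (h2 : genA2 R ∈ G)
    (hg : g ∈ UT3 R) :
    (∀ h ∈ G, Commute g h) ↔ g.val 0 1 = 0 ∧ g.val 1 2 = 0 := by
  refine ⟨fun hcomm => ⟨(commute_genA1_iff hg).mp (hcomm _ h1),
    (commute_genA2_iff hg).mp (hcomm _ h2)⟩, fun ⟨h01, h12⟩ h hh => ?_⟩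
  rw [commute_iff_of_mem_UT3 hg (hG hh), h01, h12, zero_mul, mul_zero]

end

theorem lame_iff_general (R : Type*) [CommRing R] [IsReduced R]
    (G : Subgroup (Matrix (Fin 3) (Fin 3) R)ˣ) (hG : G ≤ UT3 R)
    (h1 : genA1 R ∈ G) (h2 : genA2 R ∈ G) :
    LameProperty R G ↔
      ((∀ y ∈ G, y * genA2 R = genA2 R * y → ¬(∀ g ∈ G, y * g = g * y) →
          (y : Matrix (Fin 3) (Fin 3) R) 0 1 ∈ nonZeroDivisors R) ∧
       (∀ x ∈ G, x * genA1 R = genA1 R * x → ¬(∀ g ∈ G, x * g = g * x) →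
          (x : Matrix (Fin 3) (Fin 3) R) 1 2 ∈ nonZeroDivisors R)) := by
  simp only [LameProperty, or_imp, imp_and, forall_and, ← commute_iff_eq]
  rw [and_comm]
  refine and_congr (forall₃_congr fun y hy hcomm => ?_) (forall₃_congr fun x hx hcomm => ?_)
  · have y12 : y.val 1 2 = 0 := (commute_genA2_iff (hG hy)).mp hcomm
    rw [forall_mem_commute_iff hG h1 h2 (hG hy), and_iff_left y12, y12, zero_pow two_ne_zero,
      add_zero, pow_eq_zero_or_pow_mem_nonZeroDivisors_iff two_ne_zero]
  · have x01 : x.val 0 1 = 0 := (commute_genA1_iff (hG hx)).mp hcomm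
    rw [forall_mem_commute_iff hG h1 h2 (hG hx), and_iff_right x01, x01, zero_pow two_ne_zero,
      zero_add, pow_eq_zero_or_pow_mem_nonZeroDivisors_iff two_ne_zero]

/-- For a nontrivial locally residually-ℤ commutative ring `R` and a
subgroup `G ≤ UT₃(R)` containing `a₁, a₂`, the representation satisfies the Lame Property
iff (1) for every `y ∈ C_G(a₂) ∖ Z(G)` the entry `y₁₂` is not a zero divisor, and
(2) for every `x ∈ C_G(a₁) ∖ Z(G)` the entry `x₂₃` is not a zero divisor. -/
theorem lame_iff (R : Type*) [CommRing R] [Nontrivial R] (hR : LocResZ R)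
    (G : Subgroup (Matrix (Fin 3) (Fin 3) R)ˣ) (hG : G ≤ UT3 R)
    (h1 : genA1 R ∈ G) (h2 : genA2 R ∈ G) :
    LameProperty R G ↔
      ((∀ y ∈ G, y * genA2 R = genA2 R * y → ¬(∀ g ∈ G, y * g = g * y) →
          (y : Matrix (Fin 3) (Fin 3) R) 0 1 ∈ nonZeroDivisors R) ∧
       (∀ x ∈ G, x * genA1 R = genA1 R * x → ¬(∀ g ∈ G, x * g = g * x) →
          (x : Matrix (Fin 3) (Fin 3) R) 1 2 ∈ nonZeroDivisors R)) := by
  have := hR.isReduced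
  exact lame_iff_general R G hG h1 h2
end

section
/- Let D be a commutative integral domain every finitely generated subring of which is residually-ℤ, and let G be a finitely generated subgroup of UT₃(D) containing a₁ and a₂. Then G is discriminated into the Heisenberg group: for every finite list g₁, …, g_k of nonidentity elements of G there is a group homomorphism φ: G → UT₃(ℤ) with φ(a₁) = a₁, φ(a₂) = a₂, and φ(gᵢ) ≠ 1 for all i. -/
/-!
Let `A` be the subring of `D` generated by the matrix entries of a finite generating set of `G`, so
that `G` embeds in `UT₃(A)`. Since `A` is a domain, a ring homomorphism `A → ℤ` not annihilating the
product of nonzero entries of the matrices `gᵢ - 1` annihilates none of these entries. Applying it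
entrywise gives a homomorphism `UT₃(A) → UT₃(ℤ)` that fixes `a₁` and `a₂` and kills no `gᵢ`.
-/

open Matrix

/-- The ring `R` is *residually-`S`*: homomorphisms into `S` detect every nonzero element of `R`. -/
def IsResidually (R S : Type*) [NonAssocSemiring R] [NonAssocSemiring S] : Prop :=
  ∀ r : R, r ≠ 0 → ∃ f : R →+* S, f r ≠ 0

lemma IsResidually.exists_ringHom_forall_mem_ne_zero {R S : Type*} [CommSemiring R]
    [NoZeroDivisors R] [Nontrivial R] [Semiring S] (hRS : IsResidually R S) {l : List R}
    (hl : ∀ r ∈ l, r ≠ 0) : ∃ f : R →+* S, ∀ r ∈ l, f r ≠ 0 := by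
  have hprod : l.prod ≠ 0 := List.prod_ne_zero fun h0 => hl 0 h0 rfl
  obtain ⟨f, hf⟩ := hRS l.prod hprod
  refine ⟨f, fun r hr hfr => hf ?_⟩
  have hdvd : f r ∣ f l.prod := map_dvd f (List.dvd_prod hr)
  rwa [hfr, zero_dvd_iff] at hdvd

lemma exists_monoidHom_eq_iff_of_le_map {N M : Type*} [Group N] [Group M] {f : N →* M}
    (hf : Function.Injective f) {H : Subgroup N} {G : Subgroup M} (hG : G ≤ H.map f) :
    ∃ ψ : G →* H, ∀ (g : G) (h : H), ψ g = h ↔ (g : M) = f h := by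
  let e : H ≃* H.map f := H.equivMapOfInjective f hf
  refine ⟨e.symm.toMonoidHom.comp (Subgroup.inclusion hG), fun g h => ?_⟩
  calc e.symm (Subgroup.inclusion hG g) = h ↔ Subgroup.inclusion hG g = e h :=
        e.toEquiv.symm_apply_eq
    _ ↔ (g : M) = f h := Subtype.ext_iff

section Map

variable {R S : Type*} [CommRing R] [CommRing S]

lemma IsUnitriangular.map {M : Matrix (Fin 3) (Fin 3) R} (hM : IsUnitriangular M) (f : R →+* S) :
    IsUnitriangular (M.map f) :=
  ⟨fun i => by rw [Matrix.map_apply, hM.1 i, map_one],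
    fun i j hji => by rw [Matrix.map_apply, hM.2 i j hji, map_zero]⟩

lemma ut_mem_UT3 (a b c : R) : ut a b c ∈ UT3 R :=
  (ut_eq_iff _).mpr ⟨a, b, c, rfl⟩

lemma generalLinearGroup_map_ut (f : R →+* S) (a b c : R) :
    GeneralLinearGroup.map f (ut a b c) = ut (f a) (f b) (f c) := by
  ext i j
  fin_cases i <;> fin_cases j <;> simp [ut]

lemma generalLinearGroup_map_injective {n : Type*} [Fintype n] [DecidableEq n] {f : R →+* S}
    (hf : Function.Injective f) :
    Function.Injective (GeneralLinearGroup.map (n := n) f) :=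
  Units.map_injective (Matrix.map_injective hf)

/-- The homomorphism `UT₃(R) → UT₃(S)` that applies a ring homomorphism `f : R → S` to every
entry. -/
def UT3.map (f : R →+* S) : UT3 R →* UT3 S :=
  ((GeneralLinearGroup.map f).comp (UT3 R).subtype).codRestrict (UT3 S)
    fun g => IsUnitriangular.map g.2 f

lemma generalLinearGroup_map_genA1 (f : R →+* S) :
    GeneralLinearGroup.map f (genA1 R) = genA1 S := by
  simp only [genA1, generalLinearGroup_map_ut, map_zero, map_one]

lemma generalLinearGroup_map_genA2 (f : R →+* S) :
    GeneralLinearGroup.map f (genA2 R) = genA2 S := by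
  simp only [genA2, generalLinearGroup_map_ut, map_zero, map_one]

lemma UT3.map_genA1 (f : R →+* S) :
    UT3.map f ⟨genA1 R, genA1_mem R⟩ = ⟨genA1 S, genA1_mem S⟩ :=
  Subtype.ext (generalLinearGroup_map_genA1 f)

lemma UT3.map_genA2 (f : R →+* S) :
    UT3.map f ⟨genA2 R, genA2_mem R⟩ = ⟨genA2 S, genA2_mem S⟩ :=
  Subtype.ext (generalLinearGroup_map_genA2 f)

end Map

section Residual

variable {R S : Type*} [CommRing R] [CommRing S]

lemma exists_entry_sub_one_ne_zero {n : Type*} [Fintype n] [DecidableEq n] {g : GL n R}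
    (hg : g ≠ 1) : ∃ i j, (g.val - 1) i j ≠ 0 := by
  by_contra! hentries
  exact hg <| Units.ext <| sub_eq_zero.mp <| Matrix.ext hentries

lemma generalLinearGroup_map_ne_one_of_entry_sub_one_ne_zero {n : Type*} [Fintype n]
    [DecidableEq n] {f : R →+* S} {g : GL n R} {i j : n} (hg : f ((g.val - 1) i j) ≠ 0) :
    GeneralLinearGroup.map f g ≠ 1 := by
  intro hmap
  have hmatrix : f.mapMatrix g.val = 1 := congrArg Units.val hmap
  have hsub : f.mapMatrix (g.val - 1) = 0 := by rw [map_sub, map_one, hmatrix, sub_self]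
  exact hg (congrFun (congrFun hsub i) j)

lemma IsResidually.exists_ringHom_forall_mem_UT3_map_ne_one [IsDomain R] (hRS : IsResidually R S)
    {l : List (UT3 R)} (hl : ∀ g ∈ l, g ≠ 1) : ∃ f : R →+* S, ∀ g ∈ l, UT3.map f g ≠ 1 := by
  have hentry : ∀ g ∈ l, ∃ i j, (g.val.val - 1) i j ≠ 0 := fun g hg =>
    exists_entry_sub_one_ne_zero (Subtype.coe_ne_coe.mpr (hl g hg))
  choose! i j hij using hentry
  let entry (g : UT3 R) : R := (g.val.val - 1) (i g) (j g)
  obtain ⟨f, hf⟩ := hRS.exists_ringHom_forall_mem_ne_zero (l := l.map entry)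
    (List.forall_mem_map.mpr hij)
  refine ⟨f, fun g hg hmap => ?_⟩
  have hfg : f (entry g) ≠ 0 := hf (entry g) (List.mem_map_of_mem hg)
  exact generalLinearGroup_map_ne_one_of_entry_sub_one_ne_zero hfg (congrArg Subtype.val hmap)

end Residual

section FinitelyGenerated

variable {R : Type*} [CommRing R]

lemma mem_map_UT3_of_forall_entry_mem {A : Subring R} {g : GL (Fin 3) R} (hg : g ∈ UT3 R)
    (hA : ∀ i j, g i j ∈ A) : g ∈ (UT3 A).map (GeneralLinearGroup.map A.subtype) := by
  obtain ⟨a, b, c, rfl⟩ := (ut_eq_iff g).mp hg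
  exact ⟨ut ⟨a, hA 0 1⟩ ⟨b, hA 0 2⟩ ⟨c, hA 1 2⟩, ut_mem_UT3 _ _ _,
    generalLinearGroup_map_ut _ _ _ _⟩

lemma exists_finset_le_map_UT3_of_fg {G : Subgroup (GL (Fin 3) R)} (hfg : G.FG)
    (hG : G ≤ UT3 R) :
    ∃ s : Finset R, G ≤ (UT3 (Subring.closure (s : Set R))).map
      (GeneralLinearGroup.map (Subring.closure (s : Set R)).subtype) := by
  classical
  obtain ⟨T, rfl⟩ := hfg
  let entries : Finset R :=
    (T ×ˢ Finset.univ).image fun p : GL (Fin 3) R × Fin 3 × Fin 3 => p.1 p.2.1 p.2.2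
  refine ⟨entries, (Subgroup.closure_le _).mpr fun g hg =>
    mem_map_UT3_of_forall_entry_mem (hG (Subgroup.subset_closure hg)) fun i j =>
      Subring.subset_closure ?_⟩
  exact Finset.mem_image.mpr
    ⟨(g, i, j), Finset.mem_product.mpr ⟨hg, Finset.mem_univ (i, j)⟩, rfl⟩

end FinitelyGenerated

/-- A finitely generated subgroup `G ≤ UT₃(D)` containing `a₁, a₂`,
where `D` is an integral domain all of whose finitely generated subrings are
residually-ℤ, is discriminated into the Heisenberg group `UT₃(ℤ)` by homomorphisms
fixing `a₁` and `a₂`. -/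
theorem discriminated_into_heisenberg (D : Type*) [CommRing D] [IsDomain D]
    (hD : LocResZ D)
    (G : Subgroup (Matrix (Fin 3) (Fin 3) D)ˣ) (hfg : G.FG) (hG : G ≤ UT3 D)
    (h1 : genA1 D ∈ G) (h2 : genA2 D ∈ G) :
    ∀ l : List G, (∀ g ∈ l, g ≠ 1) →
      ∃ φ : G →* (UT3 ℤ),
        φ ⟨genA1 D, h1⟩ = ⟨genA1 ℤ, genA1_mem ℤ⟩ ∧
        φ ⟨genA2 D, h2⟩ = ⟨genA2 ℤ, genA2_mem ℤ⟩ ∧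
        ∀ g ∈ l, φ g ≠ 1 := by
  intro l hl
  obtain ⟨s, hs⟩ := exists_finset_le_map_UT3_of_fg hfg hG
  let A : Subring D := Subring.closure s
  have hA : IsResidually A ℤ := hD A ⟨s, rfl⟩
  obtain ⟨ψ, hψ⟩ := exists_monoidHom_eq_iff_of_le_map
    (generalLinearGroup_map_injective A.subtype_injective) hs
  have hψ₁ : ψ ⟨genA1 D, h1⟩ = ⟨genA1 A, genA1_mem A⟩ :=
    (hψ _ _).mpr (generalLinearGroup_map_genA1 A.subtype).symm
  have hψ₂ : ψ ⟨genA2 D, h2⟩ = ⟨genA2 A, genA2_mem A⟩ :=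
    (hψ _ _).mpr (generalLinearGroup_map_genA2 A.subtype).symm
  have hψl : ∀ g ∈ l, ψ g ≠ 1 := fun g hg hψg =>
    hl g hg (Subtype.ext (((hψ g 1).mp hψg).trans (map_one _)))
  obtain ⟨f, hf⟩ := hA.exists_ringHom_forall_mem_UT3_map_ne_one (l := l.map ψ)
    (List.forall_mem_map.mpr hψl)
  refine ⟨(UT3.map f).comp ψ, ?_, ?_, fun g hg => hf (ψ g) (List.mem_map_of_mem hg)⟩
  · rw [MonoidHom.comp_apply, hψ₁, UT3.map_genA1]
  · rw [MonoidHom.comp_apply, hψ₂, UT3.map_genA2]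
end
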